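/- Let r, s ≥ 1 be integers and let c be any integer. Then the set {c+1, c+2, …, c+(2r+1)(2s+1)} of (2r+1)(2s+1) consecutive integers can be partitioned into 2r+1 blocks, each of size 2s+1, such that every block has the same sum, namely (2s+1)·(2c+(2r+1)(2s+1)+1)/2. -/

import Mathlib

/-!
Put `n = 2r+1` and cut the interval into `2s+1` consecutive rows of length `n`. Block `i` takes one
element from each row `j`, at offset `rowPerm r j i`, where each `rowPerm r j` permutes
`{0, …, 2r}`. The blocks have equal sums as soon as `∑ j, rowPerm r j i` does not depend on `i`.
The first three rows use offsets `i`, `i + r mod n` and `3r` minus the sum of these two, which is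
again a permutation because `n` is odd; the remaining rows come in pairs with offsets `i` and
`2r - i`. Hence offsets average to `r` in every block (`sum_entry`).

The map `(j, i) ↦ entry` is injective (`entry_inj`), since the row and the offset are quotient and
remainder modulo `n`. This gives disjointness and block sizes, and the blocks cover the interval
by counting.
-/

/-- The offset within row `j` of the element assigned to block `i`, for `0 ≤ i ≤ 2r`. -/
def rowPerm (r : ℤ) (j : ℕ) (i : ℤ) : ℤ :=
  if j = 1 then (if i ≤ r then i + r else i - r - 1)
  else if j = 2 then (if i ≤ r then 2 * r - 2 * i else 4 * r + 1 - 2 * i)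
  else if j % 2 = 0 ∧ j ≠ 0 then 2 * r - i
  else i

/-- The element of row `j` assigned to block `i`; rows are numbered from `0`. -/
def entry (r c : ℤ) (j : ℕ) (i : ℤ) : ℤ := c + 1 + (2 * r + 1) * j + rowPerm r j i

lemma rowPerm_bounds {r i : ℤ} (j : ℕ) (h0 : 0 ≤ i) (h1 : i ≤ 2 * r) :
    0 ≤ rowPerm r j i ∧ rowPerm r j i ≤ 2 * r := by
  unfold rowPerm
  split_ifs <;> omega

lemma rowPerm_inj {r i i' : ℤ} (j : ℕ) (h : rowPerm r j i = rowPerm r j i') (h0 : 0 ≤ i)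
    (h1 : i ≤ 2 * r) (h0' : 0 ≤ i') (h1' : i' ≤ 2 * r) : i = i' := by
  unfold rowPerm at h
  split_ifs at h <;> omega

lemma entry_inj {r c i i' : ℤ} {j j' : ℕ} (h : entry r c j i = entry r c j' i') (h0 : 0 ≤ i)
    (h1 : i ≤ 2 * r) (h0' : 0 ≤ i') (h1' : i' ≤ 2 * r) : j = j' ∧ i = i' := by
  have hb := rowPerm_bounds j h0 h1
  have hb' := rowPerm_bounds j' h0' h1'
  have hj : j = j' := by
    unfold entry at h
    rcases lt_trichotomy j j' with hlt | heq | hlt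
    · have : (j : ℤ) + 1 ≤ j' := by exact_mod_cast hlt
      nlinarith
    · exact heq
    · have : (j' : ℤ) + 1 ≤ j := by exact_mod_cast hlt
      nlinarith
  subst hj
  refine ⟨rfl, rowPerm_inj j ?_ h0 h1 h0' h1'⟩
  unfold entry at h
  linarith

/-- The sum of a block of `2s+3` rows. The induction starts from three rows, since the first three
rows only balance jointly. -/
lemma sum_entry (r c i : ℤ) (s : ℕ) :
    ∑ j ∈ Finset.range (2 * s + 3), entry r c j i
      = (2 * s + 3) * (c + 1 + (2 * r + 1) * (s + 1) + r) := by
  induction s with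
  | zero =>
    simp only [Finset.sum_range_succ, Finset.sum_range_zero, entry, rowPerm]
    split_ifs <;> first | contradiction | omega
  | succ s ih =>
    have e : 2 * (s + 1) + 3 = 2 * s + 3 + 1 + 1 := by ring
    have h1 : rowPerm r (2 * s + 3) i = i := by
      unfold rowPerm
      split_ifs <;> omega
    have h2 : rowPerm r (2 * s + 3 + 1) i = 2 * r - i := by
      unfold rowPerm
      split_ifs <;> omega
    rw [e, Finset.sum_range_succ, Finset.sum_range_succ, ih]
    simp only [entry, h1, h2]
    push_cast
    ring

/-- For integers `r, s ≥ 1` and any integer `c`, the set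
`{c+1, c+2, …, c+(2r+1)(2s+1)}` of `(2r+1)(2s+1)` consecutive integers can be
partitioned into `2r+1` pairwise disjoint blocks, each of size `2s+1`, such
that every block has the same sum `(2s+1)·(2c+(2r+1)(2s+1)+1)/2`. -/
theorem consecutive_integers_partition (r s : ℕ) (hr : 1 ≤ r) (hs : 1 ≤ s) (c : ℤ) :
    ∃ P : Fin (2 * r + 1) → Finset ℤ,
      (∀ i j, i ≠ j → Disjoint (P i) (P j)) ∧
      Finset.univ.biUnion P
        = Finset.Icc (c + 1) (c + (2 * (r : ℤ) + 1) * (2 * (s : ℤ) + 1)) ∧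
      (∀ i, (P i).card = 2 * s + 1) ∧
      (∀ i, ∑ x ∈ P i, x
        = (2 * (s : ℤ) + 1) * (2 * c + (2 * (r : ℤ) + 1) * (2 * (s : ℤ) + 1) + 1) / 2) := by
  have hi (i : Fin (2 * r + 1)) : (0 : ℤ) ≤ (i : ℕ) ∧ ((i : ℕ) : ℤ) ≤ 2 * r := by
    have := i.isLt
    omega
  have hinj (i : Fin (2 * r + 1)) : Function.Injective fun j : ℕ => entry r c j (i : ℕ) :=
    fun _ _ h => (entry_inj h (hi i).1 (hi i).2 (hi i).1 (hi i).2).1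
  let P : Fin (2 * r + 1) → Finset ℤ := fun i =>
    (Finset.range (2 * s + 1)).image fun j => entry r c j (i : ℕ)
  have hcard (i) : (P i).card = 2 * s + 1 := by
    simp only [P]
    rw [Finset.card_image_of_injective _ (hinj i), Finset.card_range]
  have hdisj (i j) (hij : i ≠ j) : Disjoint (P i) (P j) := by
    rw [Finset.disjoint_left]
    intro x hx hx'
    obtain ⟨a, -, ha⟩ := Finset.mem_image.1 hx
    obtain ⟨b, -, hb⟩ := Finset.mem_image.1 hx'
    have := (entry_inj (ha.trans hb.symm) (hi i).1 (hi i).2 (hi j).1 (hi j).2).2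
    exact hij (Fin.ext (by exact_mod_cast this))
  refine ⟨P, hdisj, ?_, hcard, ?_⟩
  · apply Finset.eq_of_subset_of_card_le
    · intro x hx
      obtain ⟨i, -, hx⟩ := Finset.mem_biUnion.1 hx
      obtain ⟨j, hj, rfl⟩ := Finset.mem_image.1 hx
      have hj' : (j : ℤ) ≤ 2 * s := by
        have := Finset.mem_range.1 hj
        omega
      have hb := rowPerm_bounds j (hi i).1 (hi i).2
      rw [Finset.mem_Icc]
      unfold entry
      constructor
      · have : (0 : ℤ) ≤ (2 * r + 1) * j := by positivity
        linarith
      · have : (2 * (r : ℤ) + 1) * j ≤ (2 * r + 1) * (2 * s) :=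
          mul_le_mul_of_nonneg_left hj' (by positivity)
        linarith
    · rw [Finset.card_biUnion fun i _ j _ hij => hdisj i j hij, Int.card_Icc]
      simp only [hcard, Finset.sum_const, Finset.card_univ, Fintype.card_fin, smul_eq_mul]
      rw [Int.toNat_le]
      push_cast
      linarith
  · intro i
    simp only [P]
    rw [Finset.sum_image fun _ _ _ _ h => hinj i h]
    obtain ⟨t, rfl⟩ := Nat.exists_eq_add_of_le' hs
    have e : 2 * (t + 1) + 1 = 2 * t + 3 := by ring
    rw [e, sum_entry]
    symm
    apply Int.ediv_eq_of_eq_mul_right two_ne_zero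
    push_cast
    ring
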